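/- arXiv:2408.13541 — 2 statements merged into one kernel-verified Lean document; each statement's English description precedes it below -/
import Mathlib

section
/- Let n ≥ 3, 2 ≤ k ≤ n - 1, and let o = e_{n+1} ∈ Sⁿ, where Sⁿ is the unit sphere in ℝ^{n+1}. There exists a constant C > 0, depending only on n and k, such that for every radial measurable set E ⊆ Sⁿ and every (k+1)-dimensional linear subspace V ⊆ ℝ^{n+1}, ‖P_V(o)‖ · μH^k(E ∩ Sⁿ ∩ V) ≤ C · (μH^n(E))^{k/n}, where P_V denotes the orthogonal projection of ℝ^{n+1} onto V. -/
open MeasureTheory Real Set RealInnerProductSpace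

lemma radial_lintegral {E : Type*} [NormedAddCommGroup E] [NormedSpace ℝ E] [MeasurableSpace E]
    [Nontrivial E] (μ : Measure E) [FiniteDimensional ℝ E] [BorelSpace E] [μ.IsAddHaarMeasure]
    (f : ℝ → ENNReal) (hf : Measurable f) :
    ∫⁻ x, f ‖x‖ ∂μ = μ.toSphere univ *
      ∫⁻ r in Ioi (0 : ℝ), ENNReal.ofReal (r ^ (Module.finrank ℝ E - 1)) * f r :=
  calc
    ∫⁻ x, f (‖x‖) ∂μ = ∫⁻ x : ({(0)}ᶜ : Set E), f (‖x.1‖) ∂(μ.comap (↑)) := by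
      rw [lintegral_subtype_comap (measurableSet_singleton _).compl fun x ↦ f (‖x‖),
        restrict_compl_singleton]
    _ = ∫⁻ x, f x.2 ∂μ.toSphere.prod (.volumeIoiPow (Module.finrank ℝ E - 1)) := by
      have := μ.measurePreserving_homeomorphUnitSphereProd.lintegral_comp_emb
        (Homeomorph.measurableEmbedding _) (f ∘ Subtype.val ∘ Prod.snd)
      simpa using this
    _ = μ.toSphere univ * ∫⁻ x : Ioi (0 : ℝ), f x ∂.volumeIoiPow (Module.finrank ℝ E - 1) := by
      rw [lintegral_prod _ (by fun_prop)]
      simp [mul_comm]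
    _ = _ := by
      simp only [Measure.volumeIoiPow]
      rw [lintegral_withDensity_eq_lintegral_mul _ (by fun_prop) (by fun_prop)]
      simp only [Pi.mul_apply]
      rw [lintegral_subtype_comap measurableSet_Ioi
        fun a ↦ ENNReal.ofReal (a ^ (Module.finrank ℝ E - 1)) * f a]

/-- height function of the inverse stereographic projection -/
noncomputable def sfun (r : ℝ) : ℝ := (1 - r ^ 2) / (1 + r ^ 2)

lemma measurable_sfun : Measurable sfun := by unfold sfun; fun_prop

/-- radial integral -/
noncomputable def Jint (m : ℕ) (c : ℝ) (A : Set ℝ) : ENNReal :=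
  ∫⁻ r in Ioo (0 : ℝ) 1, ENNReal.ofReal (r ^ (m - 1)) * A.indicator (fun _ => 1) (c * sfun r)

lemma polarJ (m : ℕ) (hm : 1 ≤ m) : ∃ K : ENNReal, K ≠ 0 ∧ K ≠ ⊤ ∧
    ∀ (c : ℝ) (A : Set ℝ), MeasurableSet A →
    μH[(m : ℝ)] {y : EuclideanSpace ℝ (Fin m) | ‖y‖ ≤ 1 ∧ c * sfun ‖y‖ ∈ A} = K * Jint m c A := by
  have : Nonempty (Fin m) := ⟨⟨0, hm⟩⟩
  have hH : (μH[(m : ℝ)] : Measure (EuclideanSpace ℝ (Fin m))).IsAddHaarMeasure := by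
    simpa using MeasureTheory.isAddHaarMeasure_hausdorffMeasure (E := EuclideanSpace ℝ (Fin m))
  refine ⟨(μH[(m : ℝ)] : Measure (EuclideanSpace ℝ (Fin m))).toSphere univ, ?_, ?_, ?_⟩
  · rw [Ne, Measure.measure_univ_eq_zero]
    exact Measure.toSphere_ne_zero _
  · exact measure_ne_top _ _
  intro c A hA
  have hR : MeasurableSet {r : ℝ | r ≤ 1 ∧ c * sfun r ∈ A} := by
    apply MeasurableSet.inter measurableSet_Iic
    exact (measurable_sfun.const_mul c) hA
  have h := radial_lintegral (μH[(m : ℝ)] : Measure (EuclideanSpace ℝ (Fin m)))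
    ({r : ℝ | r ≤ 1 ∧ c * sfun r ∈ A}.indicator (fun _ => 1)) (measurable_const.indicator hR)
  have h1 : (fun x : EuclideanSpace ℝ (Fin m) =>
      {r : ℝ | r ≤ 1 ∧ c * sfun r ∈ A}.indicator (fun _ => (1 : ENNReal)) ‖x‖)
      = {y : EuclideanSpace ℝ (Fin m) | ‖y‖ ≤ 1 ∧ c * sfun ‖y‖ ∈ A}.indicator 1 := by
    ext x; simp [indicator]
  have hS : MeasurableSet {y : EuclideanSpace ℝ (Fin m) | ‖y‖ ≤ 1 ∧ c * sfun ‖y‖ ∈ A} :=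
    measurable_norm hR
  rw [h1, lintegral_indicator_one hS] at h
  rw [h]
  congr 1
  unfold Jint
  rw [finrank_euclideanSpace_fin, Measure.restrict_congr_set (Ioo_ae_eq_Ioc (a := (0:ℝ)) (b := 1)),
    ← lintegral_indicator measurableSet_Ioi, ← lintegral_indicator measurableSet_Ioc]
  congr 1
  ext r
  by_cases h0 : 0 < r <;> by_cases h1 : r ≤ 1 <;> by_cases h2 : c * sfun r ∈ A <;>
    simp [indicator, h0, h1, h2]

lemma J_main (n k : ℕ) (hk : 1 ≤ k) (hkn : k ≤ n) (A : Set ℝ) (hA : MeasurableSet A) :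
    Jint k 1 A ≤ 2 * (Jint n 1 A) ^ ((k : ℝ) / n) := by
  have hfin : Jint n 1 A ≠ ⊤ := by
    unfold Jint
    refine ne_top_of_le_ne_top (b := ∫⁻ r in Ioo (0 : ℝ) 1, 1) (by simp) ?_
    refine setLIntegral_mono (by fun_prop) fun r hr => ?_
    refine mul_le_one' ?_ ?_
    · exact ENNReal.ofReal_le_one.2 (pow_le_one₀ hr.1.le hr.2.le)
    · exact indicator_le_self' (by simp) _ |>.trans le_rfl
  have key : ∀ δ : ℝ, 0 < δ → Jint k 1 A ≤ ENNReal.ofReal (δ ^ k) +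
      ENNReal.ofReal (δ ^ ((k : ℝ) - n)) * Jint n 1 A := by
    intro δ hδ
    have hm : Measurable fun r => A.indicator (fun _ => (1 : ENNReal)) (1 * sfun r) :=
      (measurable_const.indicator hA).comp (measurable_sfun.const_mul 1)
    unfold Jint
    calc _ ≤ ∫⁻ r in Ioo (0 : ℝ) 1, ((Ioo 0 δ).indicator (fun _ => ENNReal.ofReal (δ ^ (k-1))) r
          + ENNReal.ofReal (δ ^ ((k : ℝ) - n)) * (ENNReal.ofReal (r ^ (n - 1)) *
            A.indicator (fun _ => 1) (1 * sfun r))) := by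
          refine setLIntegral_mono ?_ fun r hr => ?_
          · exact (measurable_const.indicator measurableSet_Ioo).add
              (((by fun_prop : Measurable fun r : ℝ => ENNReal.ofReal (r ^ (n-1))).mul hm).const_mul _)
          by_cases h : r < δ
          · have : r ∈ Ioo 0 δ := ⟨hr.1, h⟩
            rw [indicator_of_mem this]
            refine le_add_right ?_
            calc _ ≤ ENNReal.ofReal (δ ^ (k-1)) * 1 := by
                  gcongr
                  · exact hr.1.le
                  · exact indicator_le_self' (by simp) _ |>.trans le_rfl
              _ = _ := mul_one _
          · refine le_add_left ?_
            rw [← mul_assoc, ← ENNReal.ofReal_mul (by positivity)]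
            gcongr
            push Not at h
            have : r ^ (k - 1) = r ^ ((k : ℝ) - n) * r ^ (n - 1) := by
              rw [← Real.rpow_natCast, ← Real.rpow_natCast, ← Real.rpow_add hr.1]
              congr 1
              rw [Nat.cast_sub hk, Nat.cast_sub (hk.trans hkn)]; ring
            rw [this]
            have h0 := hr.1
            gcongr ?_ * _
            apply Real.rpow_le_rpow_of_nonpos hδ h
            simpa using hkn
      _ ≤ _ := by
          rw [lintegral_add_left (measurable_const.indicator measurableSet_Ioo),
            lintegral_const_mul' _ _ ENNReal.ofReal_ne_top]
          gcongr
          calc _ ≤ ∫⁻ r, (Ioo 0 δ).indicator (fun _ => ENNReal.ofReal (δ ^ (k-1))) r :=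
                setLIntegral_le_lintegral _ _
            _ = ENNReal.ofReal (δ ^ k) := by
                rw [lintegral_indicator measurableSet_Ioo]
                simp only [lintegral_const, Measure.restrict_apply MeasurableSet.univ, univ_inter,
                  Real.volume_Ioo, sub_zero]
                rw [← ENNReal.ofReal_mul (by positivity), ← pow_succ, Nat.sub_add_cancel hk]
            _ ≤ _ := le_rfl
  have hn0 : (0 : ℝ) < n := by exact_mod_cast (hk.trans hkn)
  have hk0 : (0 : ℝ) < k := by exact_mod_cast hk
  by_cases h0 : Jint n 1 A = 0
  · have : Jint k 1 A ≤ 0 := by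
      refine ENNReal.le_of_forall_pos_le_add fun ε hε _ => ?_
      have hd : (0 : ℝ) < min (ε : ℝ) 1 := lt_min (by exact_mod_cast hε) one_pos
      refine (key (min (ε : ℝ) 1) hd).trans ?_
      rw [h0, mul_zero, add_zero, zero_add]
      rw [← ENNReal.ofReal_coe_nnreal]
      apply ENNReal.ofReal_le_ofReal
      refine (pow_le_of_le_one hd.le (min_le_right _ _) (by omega)).trans (min_le_left _ _)
    exact this.trans (by simp)
  · set M := (Jint n 1 A).toReal with hM
    have hMpos : 0 < M := ENNReal.toReal_pos h0 hfin
    have hJ : Jint n 1 A = ENNReal.ofReal M := (ENNReal.ofReal_toReal hfin).symm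
    refine (key (M ^ (1 / (n : ℝ))) (by positivity)).trans ?_
    rw [hJ, ENNReal.ofReal_rpow_of_pos hMpos, ← ENNReal.ofReal_mul (by positivity), two_mul]
    have e1 : (M ^ (1 / (n : ℝ))) ^ k = M ^ ((k : ℝ) / n) := by
      rw [← Real.rpow_natCast, ← Real.rpow_mul hMpos.le]; congr 1; ring
    have e2 : (M ^ (1 / (n : ℝ))) ^ ((k : ℝ) - n) * M = M ^ ((k : ℝ) / n) := by
      rw [← Real.rpow_mul hMpos.le]
      nth_rewrite 2 [← Real.rpow_one M]
      rw [← Real.rpow_add hMpos]; congr 1; field_simp; ring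
    rw [e1, e2]

lemma sfun_cv (c : ℝ) (hc : 0 < c) (h : ℝ → ENNReal) :
    ∫⁻ t in Ioo 0 c, h t =
      ∫⁻ r in Ioo (0 : ℝ) 1, ENNReal.ofReal (c * (4 * r / (1 + r ^ 2) ^ 2)) * h (c * sfun r) := by
  have him : (fun r => c * sfun r) '' Ioo (0 : ℝ) 1 = Ioo 0 c := by
    ext t
    constructor
    · rintro ⟨r, ⟨h0, h1⟩, rfl⟩
      have : 0 < sfun r := div_pos (by nlinarith) (by positivity)
      have : sfun r < 1 := by unfold sfun; rw [div_lt_one (by positivity)]; nlinarith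
      constructor
      · positivity
      · dsimp; nlinarith
    · rintro ⟨h0, h1⟩
      have hq : 0 < (c - t) / (c + t) := div_pos (by linarith) (by linarith)
      refine ⟨√((c - t) / (c + t)), ⟨Real.sqrt_pos.2 hq, ?_⟩, ?_⟩
      · rw [Real.sqrt_lt' one_pos, one_pow, div_lt_one (by linarith)]; linarith
      · simp only [sfun, Real.sq_sqrt hq.le]
        have : c + t ≠ 0 := by linarith
        field_simp
        ring
  rw [← him, lintegral_image_eq_lintegral_abs_deriv_mul (f' := fun r => - (c * (4 * r / (1 + r ^ 2) ^ 2)))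
    measurableSet_Ioo]
  · refine setLIntegral_congr_fun measurableSet_Ioo fun r hr => ?_
    have := hr.1
    rw [abs_neg, abs_of_nonneg (by positivity)]
  · intro r hr
    apply HasDerivAt.hasDerivWithinAt
    unfold sfun
    have h1 : HasDerivAt (fun r : ℝ => 1 - r ^ 2) (-(2 * r)) r := by
      simpa using (hasDerivAt_pow 2 r).const_sub 1
    have h2 : HasDerivAt (fun r : ℝ => 1 + r ^ 2) (2 * r) r := by
      simpa using (hasDerivAt_pow 2 r).const_add 1
    refine ((h1.div h2 (by positivity)).const_mul c).congr_deriv ?_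
    have h3 : 1 + r ^ 2 ≠ 0 := by positivity
    field_simp
    ring
  · intro a ha b hb hab
    have ha0 := ha.1
    have hb0 := hb.1
    simp only [sfun] at hab
    have := mul_left_cancel₀ hc.ne' hab
    rw [div_eq_div_iff (by positivity) (by positivity)] at this
    have : a ^ 2 = b ^ 2 := by nlinarith
    exact (pow_left_inj₀ ha0.le hb0.le two_ne_zero).1 this

lemma J_scale (k : ℕ) (hk : 2 ≤ k) (c : ℝ) (hc : 0 < c) (hc1 : c ≤ 1) (A : Set ℝ) :
    ENNReal.ofReal c * Jint k c A ≤ 4 * Jint k 1 A := by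
  set w : ℝ → ℝ := fun t => √((1 - t) / (1 + t)) with hw
  set g : ℝ → ENNReal := fun t => ENNReal.ofReal (w t ^ (k - 2)) * A.indicator (fun _ => 1) t with hg
  have hk1 : k - 1 = (k - 2) + 1 := by omega
  have hws : ∀ r, 0 < r → w (sfun r) = r := by
    intro r hr
    have : (1 - sfun r) / (1 + sfun r) = r ^ 2 := by
      unfold sfun; field_simp; ring
    simp only [hw, this, Real.sqrt_sq hr.le]
  calc ENNReal.ofReal c * Jint k c A
      ≤ ∫⁻ r in Ioo (0 : ℝ) 1, ENNReal.ofReal (c * (4 * r / (1 + r ^ 2) ^ 2)) * g (c * sfun r) := by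
        unfold Jint
        rw [← lintegral_const_mul' _ _ ENNReal.ofReal_ne_top]
        refine lintegral_mono_ae ?_
        filter_upwards [ae_restrict_mem measurableSet_Ioo] with r hr
        have h0 := hr.1
        have hs0 : 0 < sfun r := div_pos (by nlinarith [hr.2]) (by positivity)
        have hs1 : sfun r < 1 := by unfold sfun; rw [div_lt_one (by positivity)]; nlinarith
        have hwr : r ≤ w (c * sfun r) := by
          conv_lhs => rw [← hws r h0]
          apply Real.sqrt_le_sqrt
          rw [div_le_div_iff₀ (by positivity) (by positivity)]
          nlinarith
        rw [hg]
        dsimp only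
        rw [← mul_assoc, ← mul_assoc, ← ENNReal.ofReal_mul hc.le, ← ENNReal.ofReal_mul (by positivity)]
        refine mul_le_mul_left (ENNReal.ofReal_le_ofReal ?_) _
        rw [mul_assoc]
        refine mul_le_mul_of_nonneg_left ?_ hc.le
        rw [hk1, pow_succ, mul_comm]
        have : r ≤ 4 * r / (1 + r ^ 2) ^ 2 := by
          rw [le_div_iff₀ (by positivity)]
          have : (1 + r ^ 2) ^ 2 ≤ 4 := by
            have : r ^ 2 ≤ 1 := pow_le_one₀ h0.le hr.2.le
            nlinarith [sq_nonneg r]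
          nlinarith
        gcongr
    _ = ∫⁻ t in Ioo 0 c, g t := (sfun_cv c hc g).symm
    _ ≤ ∫⁻ t in Ioo 0 1, g t := lintegral_mono_set (Ioo_subset_Ioo_right hc1)
    _ = ∫⁻ r in Ioo (0 : ℝ) 1, ENNReal.ofReal (1 * (4 * r / (1 + r ^ 2) ^ 2)) * g (1 * sfun r) :=
        sfun_cv 1 one_pos g
    _ ≤ 4 * Jint k 1 A := by
        unfold Jint
        rw [← lintegral_const_mul' _ _ (by simp)]
        refine lintegral_mono_ae ?_
        filter_upwards [ae_restrict_mem measurableSet_Ioo] with r hr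
        have h0 := hr.1
        rw [hg]
        dsimp only
        rw [one_mul, one_mul, hws r h0, ← mul_assoc, ← mul_assoc, ← ENNReal.ofReal_mul (by positivity),
          show (4 : ENNReal) = ENNReal.ofReal 4 by simp, ← ENNReal.ofReal_mul (by positivity)]
        refine mul_le_mul_left (ENNReal.ofReal_le_ofReal ?_) _
        rw [hk1, pow_succ r (k-2), mul_comm (r ^ (k-2)) r, ← mul_assoc]
        gcongr
        apply div_le_self (by positivity)
        apply one_le_pow₀
        nlinarith

lemma exists_iota {X : Type*} [NormedAddCommGroup X] [InnerProductSpace ℝ X] [FiniteDimensional ℝ X]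
    (m : ℕ) (V : Submodule ℝ X) (hV : Module.finrank ℝ V = m + 1) (u : X) (huV : u ∈ V)
    (hu : ‖u‖ = 1) : ∃ ι : EuclideanSpace ℝ (Fin m) →ₗᵢ[ℝ] X,
      ∀ x, (∃ y, ι y = x) ↔ x ∈ V ∧ ⟪x, u⟫ = 0 := by
  have hu0 : u ≠ 0 := by rintro rfl; simp at hu
  have h1 := Submodule.finrank_add_inf_finrank_orthogonal
    (𝕜 := ℝ) (K₁ := Submodule.span ℝ {u}) (K₂ := V) (by simpa using huV)
  rw [finrank_span_singleton hu0, hV] at h1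
  have h2 : Module.finrank ℝ ((Submodule.span ℝ {u})ᗮ ⊓ V : Submodule ℝ X) = m := by omega
  let b := (stdOrthonormalBasis ℝ ((Submodule.span ℝ {u})ᗮ ⊓ V : Submodule ℝ X)).reindex (finCongr h2)
  refine ⟨(Submodule.subtypeₗᵢ _).comp b.repr.symm.toLinearIsometry, fun x => ?_⟩
  have h3 : x ∈ ((Submodule.span ℝ {u})ᗮ ⊓ V : Submodule ℝ X) ↔ x ∈ V ∧ ⟪x, u⟫ = 0 := by
    rw [Submodule.mem_inf, Submodule.mem_orthogonal_singleton_iff_inner_left, and_comm]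
  rw [← h3]
  constructor
  · rintro ⟨y, rfl⟩
    exact (b.repr.symm y).2
  · intro hx
    exact ⟨b.repr ⟨x, hx⟩, by simp⟩

/-- inverse stereographic projection -/
noncomputable def phi {X : Type*} [NormedAddCommGroup X] [InnerProductSpace ℝ X] {m : ℕ}
    (ι : EuclideanSpace ℝ (Fin m) →ₗᵢ[ℝ] X) (u : X) (y : EuclideanSpace ℝ (Fin m)) : X :=
  (1 + ‖y‖ ^ 2)⁻¹ • ((2 : ℝ) • ι y + (1 - ‖y‖ ^ 2) • u)

section
variable {X : Type*} [NormedAddCommGroup X] [InnerProductSpace ℝ X] {m : ℕ}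
    (ι : EuclideanSpace ℝ (Fin m) →ₗᵢ[ℝ] X) (u : X)

lemma phi_inner (hu : ‖u‖ = 1) (hι : ∀ y, ⟪ι y, u⟫ = 0) (y z : EuclideanSpace ℝ (Fin m)) :
    ⟪phi ι u y, phi ι u z⟫ = (1 + ‖y‖ ^ 2)⁻¹ * (1 + ‖z‖ ^ 2)⁻¹ *
      (4 * ⟪y, z⟫ + (1 - ‖y‖ ^ 2) * (1 - ‖z‖ ^ 2)) := by
  have h2 : ∀ y, ⟪u, ι y⟫ = 0 := fun y => by rw [real_inner_comm, hι]
  have h3 : ⟪u, u⟫ = 1 := by rw [real_inner_self_eq_norm_sq, hu]; norm_num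
  simp only [phi, inner_add_left, inner_add_right, real_inner_smul_left, real_inner_smul_right, hι,
    h2, h3, LinearIsometry.inner_map_map]
  ring

lemma phi_inner_u (hu : ‖u‖ = 1) (hι : ∀ y, ⟪ι y, u⟫ = 0) (y : EuclideanSpace ℝ (Fin m)) :
    ⟪phi ι u y, u⟫ = sfun ‖y‖ := by
  have h3 : ⟪u, u⟫ = 1 := by rw [real_inner_self_eq_norm_sq, hu]; norm_num
  simp only [phi, inner_add_left, real_inner_smul_left, hι, h3, sfun]
  ring

lemma phi_norm (hu : ‖u‖ = 1) (hι : ∀ y, ⟪ι y, u⟫ = 0) (y : EuclideanSpace ℝ (Fin m)) :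
    ‖phi ι u y‖ = 1 := by
  have h : ‖phi ι u y‖ ^ 2 = 1 := by
    rw [← real_inner_self_eq_norm_sq, phi_inner ι u hu hι, real_inner_self_eq_norm_sq]
    field_simp
    ring
  nlinarith [norm_nonneg (phi ι u y)]

lemma phi_dist (hu : ‖u‖ = 1) (hι : ∀ y, ⟪ι y, u⟫ = 0) (y z : EuclideanSpace ℝ (Fin m)) :
    dist (phi ι u y) (phi ι u z) ^ 2 = 4 * dist y z ^ 2 / ((1 + ‖y‖ ^ 2) * (1 + ‖z‖ ^ 2)) := by
  rw [dist_eq_norm, dist_eq_norm, @norm_sub_sq_real, @norm_sub_sq_real, phi_norm ι u hu hι,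
    phi_norm ι u hu hι, phi_inner ι u hu hι]
  field_simp
  ring

lemma phi_lip (hu : ‖u‖ = 1) (hι : ∀ y, ⟪ι y, u⟫ = 0) : LipschitzWith 2 (phi ι u) := by
  refine LipschitzWith.of_dist_le_mul fun y z => ?_
  refine le_of_sq_le_sq ?_ (by positivity)
  rw [phi_dist ι u hu hι, mul_pow]
  refine (div_le_self (by positivity) ?_).trans (by norm_num)
  nlinarith [sq_nonneg ‖y‖, sq_nonneg ‖z‖, mul_nonneg (sq_nonneg ‖y‖) (sq_nonneg ‖z‖)]

lemma phi_antilip (hu : ‖u‖ = 1) (hι : ∀ y, ⟪ι y, u⟫ = 0) (y z : EuclideanSpace ℝ (Fin m))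
    (hy : ‖y‖ ≤ 1) (hz : ‖z‖ ≤ 1) : dist y z ≤ dist (phi ι u y) (phi ι u z) := by
  refine le_of_sq_le_sq ?_ (by positivity)
  rw [phi_dist ι u hu hι, le_div_iff₀ (by positivity)]
  have h1 : ‖y‖ ^ 2 ≤ 1 := pow_le_one₀ (norm_nonneg _) hy
  have h2 : ‖z‖ ^ 2 ≤ 1 := pow_le_one₀ (norm_nonneg _) hz
  have : (1 + ‖y‖ ^ 2) * (1 + ‖z‖ ^ 2) ≤ 4 := by nlinarith [sq_nonneg ‖y‖, sq_nonneg ‖z‖]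
  nlinarith [sq_nonneg (dist y z)]
end

lemma sphere_compare {X : Type*} [NormedAddCommGroup X] [InnerProductSpace ℝ X]
    [FiniteDimensional ℝ X] [MeasurableSpace X] [BorelSpace X]
    (m : ℕ) (V : Submodule ℝ X) (hV : Module.finrank ℝ V = m + 1) (u : X) (huV : u ∈ V)
    (hu : ‖u‖ = 1) (B : Set ℝ) (hB : ∀ t ∈ B, 0 ≤ t) :
    μH[(m : ℝ)] {y : EuclideanSpace ℝ (Fin m) | ‖y‖ ≤ 1 ∧ sfun ‖y‖ ∈ B} ≤
      μH[(m : ℝ)] {x : X | x ∈ V ∧ ‖x‖ = 1 ∧ ⟪x, u⟫ ∈ B} ∧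
    μH[(m : ℝ)] {x : X | x ∈ V ∧ ‖x‖ = 1 ∧ ⟪x, u⟫ ∈ B} ≤ 2 ^ m *
      μH[(m : ℝ)] {y : EuclideanSpace ℝ (Fin m) | ‖y‖ ≤ 1 ∧ sfun ‖y‖ ∈ B} := by
  obtain ⟨ι, hι⟩ := exists_iota m V hV u huV hu
  have hι0 : ∀ y, ⟪ι y, u⟫ = 0 := fun y => ((hι _).1 ⟨y, rfl⟩).2
  have hιV : ∀ y, ι y ∈ V := fun y => ((hι _).1 ⟨y, rfl⟩).1
  have himg : {x : X | x ∈ V ∧ ‖x‖ = 1 ∧ ⟪x, u⟫ ∈ B} =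
      phi ι u '' {y : EuclideanSpace ℝ (Fin m) | ‖y‖ ≤ 1 ∧ sfun ‖y‖ ∈ B} := by
    ext x
    constructor
    · rintro ⟨hxV, hx1, hxB⟩
      set t := ⟪x, u⟫ with ht
      have ht0 := hB t hxB
      have huu : ⟪u, u⟫ = 1 := by rw [real_inner_self_eq_norm_sq, hu]; norm_num
      obtain ⟨y, hy⟩ := (hι ((1 + t)⁻¹ • (x - t • u))).2
        ⟨V.smul_mem _ (V.sub_mem hxV (V.smul_mem _ huV)), by
          rw [real_inner_smul_left, inner_sub_left, real_inner_smul_left, huu, ← ht]; ring⟩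
      have hyn : ‖y‖ ^ 2 = (1 - t) / (1 + t) := by
        rw [← ι.norm_map, hy, norm_smul, mul_pow, @norm_sub_sq_real, real_inner_smul_right, ← ht,
          norm_smul, hu, hx1, Real.norm_eq_abs, Real.norm_eq_abs, sq_abs, mul_one, sq_abs]
        field_simp
        ring
      have hs : sfun ‖y‖ = t := by
        rw [sfun, hyn]; field_simp; ring
      refine ⟨y, ⟨?_, by rwa [hs]⟩, ?_⟩
      · have : ‖y‖ ^ 2 ≤ 1 := by rw [hyn, div_le_one (by linarith)]; linarith
        nlinarith [norm_nonneg y]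
      · rw [phi, hy, hyn]
        have e1 : (1 + (1 - t) / (1 + t))⁻¹ = (1 + t) / 2 := by field_simp; ring
        rw [e1, smul_add, smul_smul, smul_smul, smul_smul]
        have e2 : (1 + t) / 2 * (2 * (1 + t)⁻¹) = 1 := by field_simp
        have e3 : (1 + t) / 2 * (1 - (1 - t) / (1 + t)) = t := by field_simp; ring
        rw [← mul_assoc] at e2
        rw [e2, e3]; module
    · rintro ⟨y, ⟨hy1, hyB⟩, rfl⟩
      refine ⟨?_, phi_norm ι u hu hι0 y, by rwa [phi_inner_u ι u hu hι0]⟩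
      exact V.smul_mem _ (V.add_mem (V.smul_mem _ (hιV y)) (V.smul_mem _ huV))
  set S := {y : EuclideanSpace ℝ (Fin m) | ‖y‖ ≤ 1 ∧ sfun ‖y‖ ∈ B} with hS
  rw [himg]
  constructor
  · have hinj : ∀ y ∈ S, Function.invFunOn (phi ι u) S (phi ι u y) ∈ S ∧
        phi ι u (Function.invFunOn (phi ι u) S (phi ι u y)) = phi ι u y := fun y hy =>
      ⟨Function.invFunOn_mem ⟨y, hy, rfl⟩, Function.invFunOn_eq ⟨y, hy, rfl⟩⟩
    have hl : LipschitzOnWith 1 (Function.invFunOn (phi ι u) S) (phi ι u '' S) := by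
      refine LipschitzOnWith.of_dist_le_mul ?_
      rintro _ ⟨y, hy, rfl⟩ _ ⟨z, hz, rfl⟩
      obtain ⟨a1, a2⟩ := hinj y hy
      obtain ⟨b1, b2⟩ := hinj z hz
      have := phi_antilip ι u hu hι0 _ _ a1.1 b1.1
      rw [a2, b2] at this
      simpa using this
    have hle := hl.hausdorffMeasure_image_le (d := m) (by positivity)
    have hsub : S ⊆ Function.invFunOn (phi ι u) S '' (phi ι u '' S) := by
      intro y hy
      refine ⟨phi ι u y, ⟨y, hy, rfl⟩, ?_⟩
      obtain ⟨a1, a2⟩ := hinj y hy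
      have := phi_antilip ι u hu hι0 _ _ a1.1 hy.1
      rw [a2, dist_self] at this
      exact dist_le_zero.1 this
    refine (measure_mono hsub).trans (hle.trans ?_)
    simp
  · have := (phi_lip ι u hu hι0).hausdorffMeasure_image_le (d := m) (by positivity) S
    simpa using this

lemma half_bound (n k : ℕ) (hn : 3 ≤ n) (hk : 2 ≤ k) (hkn : k ≤ n) :
    ∃ C : ENNReal, C ≠ ⊤ ∧ ∀ (o : EuclideanSpace ℝ (Fin (n + 1))), ‖o‖ = 1 →
      ∀ A : Set ℝ, MeasurableSet A → (∀ t ∈ A, 0 ≤ t) →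
      ∀ V : Submodule ℝ (EuclideanSpace ℝ (Fin (n + 1))), Module.finrank ℝ V = k + 1 →
        ENNReal.ofReal ‖Submodule.orthogonalProjectionOnto V o‖ *
          μH[(k : ℝ)] {x : EuclideanSpace ℝ (Fin (n + 1)) | x ∈ V ∧ ‖x‖ = 1 ∧ ⟪x, o⟫ ∈ A} ≤
        C * (μH[(n : ℝ)] {x : EuclideanSpace ℝ (Fin (n + 1)) | ‖x‖ = 1 ∧ ⟪x, o⟫ ∈ A}) ^
          ((k : ℝ) / n) := by
  obtain ⟨Kk, hk0, hkt, hKk⟩ := polarJ k (by omega)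
  obtain ⟨Kn, hn0, hnt, hKn⟩ := polarJ n (by omega)
  have hkn0 : (0 : ℝ) ≤ (k : ℝ) / n := by positivity
  refine ⟨2 ^ k * Kk * (4 * (2 * Kn⁻¹ ^ ((k : ℝ) / n))), ?_, ?_⟩
  · have : Kn⁻¹ ^ ((k : ℝ) / n) ≠ ⊤ :=
      ENNReal.rpow_ne_top_of_nonneg hkn0 (ENNReal.inv_ne_top.2 hn0)
    refine ENNReal.mul_ne_top (ENNReal.mul_ne_top (by simp) hkt)
      (ENNReal.mul_ne_top (by simp) (ENNReal.mul_ne_top (by simp) this))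
  intro o ho A hA hA0 V hV
  set c := ‖Submodule.orthogonalProjectionOnto V o‖ with hc
  have hc1 : c ≤ 1 := by
    rw [← ho]; exact Submodule.norm_orthogonalProjectionOnto_apply_le V o
  rcases (norm_nonneg _ : 0 ≤ c).eq_or_lt with h0 | hcpos
  · rw [hc, ← h0]; simp
  set p : EuclideanSpace ℝ (Fin (n + 1)) := (Submodule.orthogonalProjectionOnto V o :) with hp
  have hpn : ‖p‖ = c := rfl
  have hxo : ∀ x ∈ V, ⟪x, o⟫ = c * ⟪x, c⁻¹ • p⟫ := by
    intro x hx
    rw [real_inner_smul_right, ← mul_assoc, mul_inv_cancel₀ hcpos.ne', one_mul]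
    have := Submodule.inner_orthogonalProjectionOnto_eq_of_mem_left (K := V) ⟨x, hx⟩ o
    rw [← this]
    rfl
  have hu : ‖c⁻¹ • p‖ = 1 := by
    rw [norm_smul, hpn, norm_inv, Real.norm_of_nonneg hcpos.le, inv_mul_cancel₀ hcpos.ne']
  have hset : {x : EuclideanSpace ℝ (Fin (n + 1)) | x ∈ V ∧ ‖x‖ = 1 ∧ ⟪x, o⟫ ∈ A} =
      {x : EuclideanSpace ℝ (Fin (n + 1)) | x ∈ V ∧ ‖x‖ = 1 ∧ ⟪x, c⁻¹ • p⟫ ∈ {t | c * t ∈ A}} := by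
    ext x
    simp only [mem_ofPred_eq]
    constructor
    · rintro ⟨h1, h2, h3⟩; exact ⟨h1, h2, by rwa [← hxo x h1]⟩
    · rintro ⟨h1, h2, h3⟩; exact ⟨h1, h2, by rwa [hxo x h1]⟩
  have hup := (sphere_compare k V hV (c⁻¹ • p) (V.smul_mem _ (Submodule.coe_mem _)) hu
    {t | c * t ∈ A} (fun t ht => nonneg_of_mul_nonneg_right (hA0 _ ht) hcpos)).2
  have hlow := (sphere_compare n (⊤ : Submodule ℝ (EuclideanSpace ℝ (Fin (n + 1)))) (by simp) o
    (by simp) ho A hA0).1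
  have hKn' := hKn 1 A hA
  simp only [one_mul] at hKn'
  simp only [Submodule.mem_top, true_and] at hlow
  rw [hKn'] at hlow
  rw [← hset] at hup
  simp only [mem_ofPred_eq] at hup
  rw [hKk c A hA] at hup
  set Q := μH[(n : ℝ)] {x : EuclideanSpace ℝ (Fin (n + 1)) | ‖x‖ = 1 ∧ ⟪x, o⟫ ∈ A} with hQ
  have hJn : Jint n 1 A ≤ Kn⁻¹ * Q := by
    rw [mul_comm, ← div_eq_mul_inv, ENNReal.le_div_iff_mul_le (Or.inl hn0) (Or.inl hnt), mul_comm]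
    exact hlow
  calc _ ≤ ENNReal.ofReal c * (2 ^ k * (Kk * Jint k c A)) := by gcongr
    _ = 2 ^ k * Kk * (ENNReal.ofReal c * Jint k c A) := by ring
    _ ≤ 2 ^ k * Kk * (4 * Jint k 1 A) := by
        exact mul_le_mul_right (J_scale k hk c hcpos hc1 A) _
    _ ≤ 2 ^ k * Kk * (4 * (2 * (Jint n 1 A) ^ ((k : ℝ) / n))) := by
        gcongr
        exact J_main n k (by omega) hkn A hA
    _ ≤ 2 ^ k * Kk * (4 * (2 * (Kn⁻¹ * Q) ^ ((k : ℝ) / n))) := by gcongr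
    _ = _ := by rw [ENNReal.mul_rpow_of_nonneg _ _ hkn0]; ring

theorem spherical_kplane_endpoint (n k : ℕ) (hn : 3 ≤ n) (hk : 2 ≤ k) (hkn : k ≤ n - 1) :
    ∃ C : ℝ, 0 < C ∧
      ∀ (E : Set (EuclideanSpace ℝ (Fin (n + 1)))) (A : Set ℝ), MeasurableSet A →
        E = {x : EuclideanSpace ℝ (Fin (n + 1)) |
              ‖x‖ = 1 ∧ ⟪x, EuclideanSpace.single (Fin.last n) (1 : ℝ)⟫ ∈ A} →
        ∀ V : Submodule ℝ (EuclideanSpace ℝ (Fin (n + 1))),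
          Module.finrank ℝ V = k + 1 →
          ENNReal.ofReal ‖Submodule.orthogonalProjectionOnto V (EuclideanSpace.single (Fin.last n) (1 : ℝ))‖ *
              μH[(k : ℝ)] (E ∩ {x : EuclideanSpace ℝ (Fin (n + 1)) | ‖x‖ = 1} ∩
                (V : Set (EuclideanSpace ℝ (Fin (n + 1))))) ≤
            ENNReal.ofReal C * (μH[(n : ℝ)] E) ^ ((k : ℝ) / n) := by
  obtain ⟨C, hCt, hC⟩ := half_bound n k hn hk (by omega)
  refine ⟨2 * C.toReal + 1, by positivity, ?_⟩
  intro E A hA hE V hV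
  set o : EuclideanSpace ℝ (Fin (n + 1)) := EuclideanSpace.single (Fin.last n) (1 : ℝ) with ho
  have ho1 : ‖o‖ = 1 := by simp [ho]
  set A1 : Set ℝ := A ∩ Ici 0 with hA1
  set A2 : Set ℝ := (fun t => -t) ⁻¹' A ∩ Ici 0 with hA2
  have h1 := hC o ho1 A1 (hA.inter measurableSet_Ici) (fun t ht => ht.2) V hV
  have h2 := hC o ho1 A2 ((measurable_neg hA).inter measurableSet_Ici) (fun t ht => ht.2) V hV
  have hneg : ∀ (d : ℝ) (S : Set (EuclideanSpace ℝ (Fin (n + 1)))),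
      μH[d] ((fun x => -x) '' S) = μH[d] S := fun d S =>
    (IsometryEquiv.neg (EuclideanSpace ℝ (Fin (n + 1)))).hausdorffMeasure_image d S
  have hE1 : μH[(n : ℝ)] {x : EuclideanSpace ℝ (Fin (n + 1)) | ‖x‖ = 1 ∧ ⟪x, o⟫ ∈ A1} ≤
      μH[(n : ℝ)] E := by
    apply measure_mono
    rw [hE]
    rintro x ⟨hx, hx'⟩
    exact ⟨hx, hx'.1⟩
  have hE2 : μH[(n : ℝ)] {x : EuclideanSpace ℝ (Fin (n + 1)) | ‖x‖ = 1 ∧ ⟪x, o⟫ ∈ A2} ≤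
      μH[(n : ℝ)] E := by
    rw [← hneg]
    apply measure_mono
    rw [hE]
    rintro _ ⟨x, ⟨hx, hx'⟩, rfl⟩
    refine ⟨by simpa using hx, ?_⟩
    rw [inner_neg_left]
    exact hx'.1
  have hV' : μH[(k : ℝ)] (E ∩ {x : EuclideanSpace ℝ (Fin (n + 1)) | ‖x‖ = 1} ∩
      (V : Set (EuclideanSpace ℝ (Fin (n + 1))))) ≤
      μH[(k : ℝ)] {x : EuclideanSpace ℝ (Fin (n + 1)) | x ∈ V ∧ ‖x‖ = 1 ∧ ⟪x, o⟫ ∈ A1} +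
      μH[(k : ℝ)] {x : EuclideanSpace ℝ (Fin (n + 1)) | x ∈ V ∧ ‖x‖ = 1 ∧ ⟪x, o⟫ ∈ A2} := by
    rw [← hneg k {x : EuclideanSpace ℝ (Fin (n + 1)) | x ∈ V ∧ ‖x‖ = 1 ∧ ⟪x, o⟫ ∈ A2}]
    refine (measure_mono ?_).trans (measure_union_le _ _)
    rintro x ⟨⟨hxE, hx1⟩, hxV⟩
    rw [hE] at hxE
    rcases le_total 0 ⟪x, o⟫ with h | h
    · exact Or.inl ⟨hxV, hx1, hxE.2, h⟩
    · refine Or.inr ⟨-x, ⟨V.neg_mem hxV, by simpa using hx1, ?_, ?_⟩, neg_neg x⟩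
      · rw [inner_neg_left, mem_preimage, neg_neg]; exact hxE.2
      · rw [inner_neg_left, mem_Ici]; linarith
  have hkn0 : (0 : ℝ) ≤ (k : ℝ) / n := by positivity
  calc _ ≤ _ := mul_le_mul_right hV' _
    _ ≤ C * (μH[(n : ℝ)] E) ^ ((k : ℝ) / n) + C * (μH[(n : ℝ)] E) ^ ((k : ℝ) / n) := by
        rw [mul_add]
        refine add_le_add (h1.trans ?_) (h2.trans ?_) <;> gcongr
    _ = (2 * C) * (μH[(n : ℝ)] E) ^ ((k : ℝ) / n) := by ring
    _ ≤ _ := by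
        gcongr
        rw [ENNReal.ofReal_add (by positivity) (by positivity), ENNReal.ofReal_mul (by positivity),
          ENNReal.ofReal_toReal hCt]
        simp
end

section
/- Let n ≥ 2 and let o = e_{n+1} ∈ Sⁿ, where Sⁿ is the unit sphere in ℝ^{n+1}. There exists a constant C > 0, depending only on n, such that for every radial measurable set E ⊆ Sⁿ and every 2-dimensional linear subspace V ⊆ ℝ^{n+1}, ‖P_V(o)‖ · μH^1(E ∩ Sⁿ ∩ V) ≤ C · (μH^n(E))^{1/n}, where P_V denotes the orthogonal projection of ℝ^{n+1} onto V. -/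
open MeasureTheory Real Set RealInnerProductSpace

lemma polar_set (n : ℕ) (R : Set ℝ) (hR : MeasurableSet R) (hR0 : R ⊆ Ioi 0) :
    (volume : Measure (EuclideanSpace ℝ (Fin n))) {y | ‖y‖ ∈ R} =
      (n * volume (Metric.ball (0 : EuclideanSpace ℝ (Fin n)) 1)) *
        ∫⁻ r in R, ENNReal.ofReal (r ^ (n - 1)) := by
  have hfr : Module.finrank ℝ (EuclideanSpace ℝ (Fin n)) = n := by simp
  have hmp := (volume : Measure (EuclideanSpace ℝ (Fin n))).measurePreserving_homeomorphUnitSphereProd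
  rw [hfr] at hmp
  have h1 := hmp.measure_preimage_emb (Homeomorph.measurableEmbedding _)
    (univ ×ˢ ((Subtype.val : Ioi (0:ℝ) → ℝ) ⁻¹' R))
  rw [Measure.prod_prod, Measure.toSphere_apply_univ, hfr, Measure.volumeIoiPow,
    withDensity_apply _ (measurable_subtype_coe hR),
    setLIntegral_subtype measurableSet_Ioi _ fun a : ℝ ↦ .ofReal (a ^ (n-1)),
    (MeasurableEmbedding.subtype_coe (measurableSet_singleton _).compl).comap_apply] at h1
  rw [Subtype.image_preimage_coe, inter_eq_right.2 hR0] at h1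
  rw [← h1]
  congr 1
  ext y
  constructor
  · intro hy
    have : y ≠ 0 := by
      rintro rfl
      have := hR0 hy
      simp at this
    refine ⟨⟨y, this⟩, ?_, rfl⟩
    simpa using hy
  · rintro ⟨⟨y, hy0⟩, hy, rfl⟩
    simpa using hy

lemma bathtub (n : ℕ) (hn : 1 ≤ n) (B : Set ℝ) (hB : MeasurableSet B) (hB0 : B ⊆ Ioi 0)
    (hfin : volume B ≠ ⊤) :
    (volume B / 2) ^ n ≤ ∫⁻ r in B, ENNReal.ofReal (r ^ (n - 1)) := by
  set b := (volume B).toReal with hb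
  have hb0 : 0 ≤ b := ENNReal.toReal_nonneg
  have hvb : volume B / 2 = ENNReal.ofReal (b / 2) := by
    rw [ENNReal.ofReal_div_of_pos (by norm_num), hb, ENNReal.ofReal_toReal hfin]; simp
  have h1 : volume B / 2 ≤ volume (B \ Ioo 0 (b / 2)) := by
    have h2 : volume B ≤ volume (B \ Ioo 0 (b / 2)) + volume B / 2 := by
      calc volume B ≤ volume ((B \ Ioo 0 (b / 2)) ∪ Ioo 0 (b/2)) := by
            apply measure_mono; intro x hx; by_cases h : x ∈ Ioo 0 (b/2)
            · exact Or.inr h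
            · exact Or.inl ⟨hx, h⟩
        _ ≤ _ := measure_union_le _ _
        _ = _ := by rw [Real.volume_Ioo, hvb]; simp
    have h3 : volume B / 2 + volume B / 2 ≤ volume (B \ Ioo 0 (b / 2)) + volume B / 2 := by
      rwa [ENNReal.add_halves]
    exact (ENNReal.add_le_add_iff_right (by rw [hvb]; simp)).1 h3
  calc (volume B / 2) ^ n = ENNReal.ofReal ((b/2) ^ (n-1)) * (volume B / 2) := by
        rw [ENNReal.ofReal_pow (by positivity), ← hvb, ← pow_succ, Nat.sub_add_cancel hn]
    _ ≤ ENNReal.ofReal ((b/2) ^ (n-1)) * volume (B \ Ioo 0 (b / 2)) := by gcongr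
    _ = ∫⁻ r in B \ Ioo 0 (b/2), ENNReal.ofReal ((b/2) ^ (n-1)) := by simp
    _ ≤ ∫⁻ r in B \ Ioo 0 (b/2), ENNReal.ofReal (r ^ (n - 1)) := by
        apply setLIntegral_mono' (hB.diff measurableSet_Ioo)
        intro r hr
        have : b / 2 ≤ r := by
          by_contra h
          exact hr.2 ⟨hB0 hr.1, not_le.1 h⟩
        gcongr
    _ ≤ _ := lintegral_mono_set sdiff_subset

/-- one-dimensional change of variables -/
lemma change_var (n : ℕ) (hn : 2 ≤ n) (p : ℝ) (hp : 0 < p) (hp1 : p ≤ 1) (A : Set ℝ)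
    (hA : MeasurableSet A) :
    ENNReal.ofReal (p / π ^ (n-1)) *
      ∫⁻ r in {φ ∈ Ioo 0 (π/2) | p * cos φ ∈ A}, ENNReal.ofReal (r ^ (n - 1)) ≤
    ∫⁻ r in {r ∈ Ioo 0 1 | 1 - r ^ 2 ∈ A}, ENNReal.ofReal (r ^ (n - 1)) := by
  set B := {φ ∈ Ioo 0 (π/2) | p * cos φ ∈ A} with hBdef
  have hB : MeasurableSet B := by
    apply measurableSet_Ioo.inter
    exact (by fun_prop : Measurable fun φ : ℝ => p * cos φ) hA
  let f : ℝ → ℝ := fun φ => sqrt (1 - p * cos φ)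
  have hpos : ∀ φ ∈ B, 0 < 1 - p * cos φ ∧ 0 < cos φ ∧ 0 < sin φ ∧ cos φ < 1 := by
    intro φ hφ
    have h1 : 0 < sin φ := sin_pos_of_pos_of_lt_pi hφ.1.1 (by linarith [hφ.1.2, pi_pos])
    have h2 : 0 < cos φ := cos_pos_of_mem_Ioo ⟨by linarith [hφ.1.1, pi_pos], hφ.1.2⟩
    have h3 : cos φ < 1 := by nlinarith [sin_sq_add_cos_sq φ]
    exact ⟨by nlinarith, h2, h1, h3⟩
  have hder : ∀ φ ∈ B, HasDerivWithinAt f (p * sin φ / (2 * sqrt (1 - p * cos φ))) B φ := by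
    intro φ hφ
    have h1 : HasDerivAt (fun φ => 1 - p * cos φ) (p * sin φ) φ := by
      have := ((hasDerivAt_cos φ).const_mul p).const_sub 1
      simpa using this
    exact (h1.sqrt (hpos φ hφ).1.ne').hasDerivWithinAt
  have hinj : InjOn f B := by
    intro x hx y hy hxy
    have h1 := (Real.sqrt_inj (hpos x hx).1.le (hpos y hy).1.le).1 hxy
    have h2 : cos x = cos y := by
      have : p * cos x = p * cos y := by linarith
      exact mul_left_cancel₀ hp.ne' this
    exact injOn_cos ⟨hx.1.1.le, by linarith [hx.1.2, pi_pos]⟩ ⟨hy.1.1.le, by linarith [hy.1.2, pi_pos]⟩ h2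
  have key := lintegral_image_eq_lintegral_abs_deriv_mul hB hder hinj
    (fun r => ENNReal.ofReal (r ^ (n - 1)))
  have hsub : f '' B ⊆ {r ∈ Ioo 0 1 | 1 - r ^ 2 ∈ A} := by
    rintro _ ⟨φ, hφ, rfl⟩
    obtain ⟨h1, h2, h3, h4⟩ := hpos φ hφ
    refine ⟨⟨Real.sqrt_pos.2 h1, ?_⟩, ?_⟩
    · rw [Real.sqrt_lt' one_pos]; nlinarith
    · simp only [f]
      rw [Real.sq_sqrt h1.le]
      simpa using hφ.2
  refine le_trans ?_ (lintegral_mono_set hsub)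
  rw [key, ← lintegral_const_mul _ (by fun_prop)]
  apply setLIntegral_mono' hB
  intro φ hφ
  obtain ⟨h1, h2, h3, h4⟩ := hpos φ hφ
  have hφ0 := hφ.1.1
  have hs : φ / π ≤ sin φ / 2 := by
    have := mul_le_sin hφ.1.1.le hφ.1.2.le
    have e : φ / π = (2 / π * φ) / 2 := by field_simp
    rw [e]; linarith
  have hs0 : 0 < sqrt (1 - p * cos φ) := Real.sqrt_pos.2 h1
  have hq : φ / π ≤ sqrt (1 - p * cos φ) := by
    refine hs.trans (Real.le_sqrt_of_sq_le ?_)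
    have : 1 - cos φ ≤ 1 - p * cos φ := by nlinarith
    nlinarith [sin_sq_add_cos_sq φ]
  rw [← ENNReal.ofReal_mul (by positivity), ← ENNReal.ofReal_mul (by positivity)]
  apply ENNReal.ofReal_le_ofReal
  rw [abs_of_pos (by positivity)]
  obtain ⟨m, rfl⟩ : ∃ m, n = m + 2 := ⟨n - 2, by omega⟩
  simp only [f, show m + 2 - 1 = m + 1 by omega]
  calc p / π ^ (m+1) * φ ^ (m+1) = p * ((φ / π) * (φ / π) ^ m) := by
        rw [← pow_succ', div_pow]; ring
    _ ≤ p * ((sin φ / 2) * (sqrt (1 - p * cos φ)) ^ m) := by gcongr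
    _ = _ := by field_simp; try ring

/-- The radial set with profile `A`. -/
def radSet (n : ℕ) (A : Set ℝ) : Set (EuclideanSpace ℝ (Fin (n + 1))) :=
  {x | ‖x‖ = 1 ∧ ⟪x, EuclideanSpace.single (Fin.last n) (1 : ℝ)⟫ ∈ A}

lemma inner_o (n : ℕ) (x : EuclideanSpace ℝ (Fin (n + 1))) :
    ⟪x, EuclideanSpace.single (Fin.last n) (1 : ℝ)⟫ = x (Fin.last n) := by
  simp [EuclideanSpace.inner_single_right]

noncomputable def lamb (n : ℕ) (x : EuclideanSpace ℝ (Fin (n + 1))) : Fin n → ℝ :=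
  fun i => x i.castSucc * (sqrt (1 + x (Fin.last n)))⁻¹

lemma inv_sqrt_lip (s t : ℝ) (hs : 0 ≤ s) (ht : 0 ≤ t) :
    |(sqrt (1 + s))⁻¹ - (sqrt (1 + t))⁻¹| ≤ |s - t| := by
  have h1 : 1 ≤ sqrt (1 + s) := Real.one_le_sqrt.2 (by linarith)
  have h2 : 1 ≤ sqrt (1 + t) := Real.one_le_sqrt.2 (by linarith)
  have e1 : sqrt (1 + s) ^ 2 = 1 + s := Real.sq_sqrt (by linarith)
  have e2 : sqrt (1 + t) ^ 2 = 1 + t := Real.sq_sqrt (by linarith)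
  generalize sqrt (1 + s) = a at *
  generalize sqrt (1 + t) = b at *
  have e : s - t = (a - b) * (a + b) := by linarith [e1, e2, sq_sub_sq a b]
  have e' : a⁻¹ - b⁻¹ = (b - a) * (a⁻¹ * b⁻¹) := by field_simp
  have ha : a⁻¹ ≤ 1 := inv_le_one_of_one_le₀ h1
  have hb : b⁻¹ ≤ 1 := inv_le_one_of_one_le₀ h2
  have ha0 : 0 < a⁻¹ := by positivity
  have hb0 : 0 < b⁻¹ := by positivity
  rw [e, e', abs_mul (b - a), abs_mul (a - b), abs_sub_comm b a]
  apply mul_le_mul_of_nonneg_left _ (abs_nonneg _)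
  rw [abs_of_pos (by positivity), abs_of_pos (by linarith)]
  nlinarith

lemma lamb_lip (n : ℕ) : LipschitzOnWith 2 (lamb n) {x | ‖x‖ = 1 ∧ 0 ≤ x (Fin.last n)} := by
  apply LipschitzOnWith.of_dist_le_mul
  rintro x ⟨hx, hx0⟩ y ⟨hy, hy0⟩
  rw [dist_pi_le_iff (by positivity)]
  intro i
  have c : ∀ j, |x j - y j| ≤ dist x y := by
    intro j
    have := PiLp.norm_apply_le (x - y) j
    rw [dist_eq_norm]; simpa using this
  have h1 := c i.castSucc
  have h2 := c (Fin.last n)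
  have h3 := inv_sqrt_lip _ _ hx0 hy0
  have h4 : |y i.castSucc| ≤ 1 := by
    have := PiLp.norm_apply_le y i.castSucc
    rw [hy] at this; simpa using this
  have h5 : (sqrt (1 + x (Fin.last n)))⁻¹ ≤ 1 :=
    inv_le_one_of_one_le₀ (Real.one_le_sqrt.2 (by linarith))
  have h6 : 0 ≤ (sqrt (1 + x (Fin.last n)))⁻¹ := by positivity
  rw [Real.dist_eq]
  unfold lamb
  set a := (sqrt (1 + x (Fin.last n)))⁻¹
  set b := (sqrt (1 + y (Fin.last n)))⁻¹
  calc |x i.castSucc * a - y i.castSucc * b|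
      = |(x i.castSucc - y i.castSucc) * a + y i.castSucc * (a - b)| := by ring_nf
    _ ≤ |x i.castSucc - y i.castSucc| * a + |y i.castSucc| * |a - b| := by
        refine (abs_add_le _ _).trans ?_
        rw [abs_mul, abs_mul, abs_of_nonneg h6]
    _ ≤ dist x y * 1 + 1 * dist x y := by gcongr; exact h3.trans h2
    _ = _ := by push_cast; ring

lemma lamb_surj (n : ℕ) (A : Set ℝ) (y : EuclideanSpace ℝ (Fin n))
    (hy : ‖y‖ ∈ {r ∈ Ioo (0:ℝ) 1 | 1 - r ^ 2 ∈ A}) :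
    y.ofLp ∈ lamb n '' (radSet n A ∩ {x | ‖x‖ = 1 ∧ 0 ≤ x (Fin.last n)}) := by
  obtain ⟨⟨h0, h1⟩, hA⟩ := hy
  set r := ‖y‖ with hr
  have hpos : 0 < 2 - r ^ 2 := by nlinarith
  let x : EuclideanSpace ℝ (Fin (n + 1)) :=
    WithLp.toLp 2 (Fin.snoc (α := fun _ => ℝ) (fun i => y i * sqrt (2 - r ^ 2)) (1 - r ^ 2))
  have hxl : x (Fin.last n) = 1 - r ^ 2 := by simp [x]
  have hxc : ∀ i : Fin n, x i.castSucc = y i * sqrt (2 - r ^ 2) := by intro i; simp [x]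
  have hxn : ‖x‖ = 1 := by
    have hr2 : r ^ 2 = ∑ i, y i ^ 2 := by rw [hr, EuclideanSpace.real_norm_sq_eq]
    have : ‖x‖ ^ 2 = 1 := by
      rw [EuclideanSpace.real_norm_sq_eq, Fin.sum_univ_castSucc, hxl]
      simp_rw [hxc, mul_pow, Real.sq_sqrt hpos.le]
      rw [← Finset.sum_mul, ← hr2]; ring
    nlinarith [norm_nonneg x]
  refine ⟨x, ⟨⟨hxn, ?_⟩, hxn, ?_⟩, ?_⟩
  · rw [inner_o, hxl]; exact hA
  · rw [hxl]; nlinarith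
  · funext i
    unfold lamb
    rw [hxc, hxl, show 1 + (1 - r ^ 2) = 2 - r ^ 2 by ring]
    have := Real.sqrt_pos.2 hpos
    field_simp

lemma vol_le (n : ℕ) (A : Set ℝ) (hA : MeasurableSet A) :
    (volume : Measure (EuclideanSpace ℝ (Fin n))) {y | ‖y‖ ∈ {r ∈ Ioo (0:ℝ) 1 | 1 - r ^ 2 ∈ A}} ≤
      2 ^ n * μH[(n : ℝ)] (radSet n A) := by
  have hm : MeasurableSet {y : EuclideanSpace ℝ (Fin n) |
      ‖y‖ ∈ {r ∈ Ioo (0:ℝ) 1 | 1 - r ^ 2 ∈ A}} := by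
    apply measurable_norm
    exact measurableSet_Ioo.inter ((by fun_prop : Measurable fun r : ℝ => 1 - r ^ 2) hA)
  rw [← (PiLp.volume_preserving_toLp (Fin n)).measure_preimage hm.nullMeasurableSet]
  have h := (lamb_lip n).mono (inter_subset_right (s := radSet n A))
  have h2 := h.hausdorffMeasure_image_le (d := (n : ℝ)) (by positivity)
  have h3 : (μH[(n : ℝ)] : Measure (Fin n → ℝ)) = volume := by
    rw [← hausdorffMeasure_pi_real]; simp
  rw [h3] at h2
  calc _ ≤ volume (lamb n '' (radSet n A ∩ {x | ‖x‖ = 1 ∧ 0 ≤ x (Fin.last n)})) := by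
        apply measure_mono
        intro y hy
        exact lamb_surj n A (WithLp.toLp 2 y) hy
    _ ≤ _ := h2
    _ ≤ _ := by
        rw [ENNReal.rpow_natCast]
        push_cast
        gcongr
        exact inter_subset_left

lemma half_bound_s7 (n : ℕ) (hn : 2 ≤ n) : ∃ C : ℝ, 0 ≤ C ∧ ∀ (A : Set ℝ), MeasurableSet A →
    ∀ p : ℝ, 0 < p → p ≤ 1 →
    ENNReal.ofReal p * volume {φ ∈ Icc 0 (π/2) | p * cos φ ∈ A} ≤
      ENNReal.ofReal C * (μH[(n : ℝ)] (radSet n A)) ^ ((1 : ℝ) / n) := by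
  have hn0 : (0 : ℝ) < n := by positivity
  set K : ENNReal := n * volume (Metric.ball (0 : EuclideanSpace ℝ (Fin n)) 1) with hK
  have hK0 : K ≠ 0 := by
    apply mul_ne_zero
    · simp; omega
    · exact (Metric.measure_ball_pos _ _ one_pos).ne'
  have hKt : K ≠ ⊤ := ENNReal.mul_ne_top (by simp) measure_ball_lt_top.ne
  set Q : ENNReal := ENNReal.ofReal (1 / π ^ (n-1)) with hQ
  have hQ0 : Q ≠ 0 := by
    rw [hQ]; simp; positivity
  have hQt : Q ≠ ⊤ := by simp [hQ]
  set D : ENNReal := 4 ^ n * (K * Q)⁻¹ with hD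
  have hDt : D ≠ ⊤ := ENNReal.mul_ne_top (by simp) (by simp [hK0, hQ0])
  refine ⟨(D ^ ((1:ℝ)/n)).toReal, ENNReal.toReal_nonneg, ?_⟩
  intro A hA p hp hp1
  rw [ENNReal.ofReal_toReal (ENNReal.rpow_ne_top_of_nonneg (by positivity) hDt)]
  set B := {φ ∈ Ioo 0 (π/2) | p * cos φ ∈ A} with hBdef
  have hB : MeasurableSet B := by
    apply measurableSet_Ioo.inter
    exact (by fun_prop : Measurable fun φ : ℝ => p * cos φ) hA
  have hBI : volume {φ ∈ Icc 0 (π/2) | p * cos φ ∈ A} = volume B := by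
    apply measure_congr
    exact (Ioo_ae_eq_Icc.symm.inter (ae_eq_refl _))
  have hBt : volume B ≠ ⊤ :=
    ((measure_mono (fun x hx => hx.1 : B ⊆ Ioo 0 (π/2))).trans_lt measure_Ioo_lt_top).ne
  rw [hBI]
  have h1 := bathtub n (by omega) B hB (fun x hx => hx.1.1) hBt
  have h2 := change_var n hn p hp hp1 A hA
  have h3 := polar_set n {r ∈ Ioo (0:ℝ) 1 | 1 - r ^ 2 ∈ A}
    (measurableSet_Ioo.inter ((by fun_prop : Measurable fun r : ℝ => 1 - r ^ 2) hA))
    (fun x hx => hx.1.1)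
  have h4 := vol_le n A hA
  rw [h3] at h4
  have hpq : ENNReal.ofReal (p / π ^ (n-1)) = ENNReal.ofReal p * Q := by
    rw [hQ, ← ENNReal.ofReal_mul hp.le]; congr 1; ring
  have h5 : K * (ENNReal.ofReal p * Q * (volume B / 2) ^ n) ≤ 2 ^ n * μH[(n : ℝ)] (radSet n A) := by
    refine le_trans ?_ h4
    gcongr
    refine le_trans ?_ h2
    rw [hpq]
    gcongr
  have hpn : ENNReal.ofReal p ^ n ≤ ENNReal.ofReal p := by
    rw [← ENNReal.ofReal_pow hp.le]
    exact ENNReal.ofReal_le_ofReal (pow_le_of_le_one hp.le hp1 (by omega))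
  have h6 : (ENNReal.ofReal p * volume B) ^ n ≤ D * μH[(n : ℝ)] (radSet n A) := by
    have hKQ0 : K * Q ≠ 0 := mul_ne_zero hK0 hQ0
    have hKQt : K * Q ≠ ⊤ := ENNReal.mul_ne_top hKt hQt
    calc (ENNReal.ofReal p * volume B) ^ n = ENNReal.ofReal p ^ n * volume B ^ n := mul_pow _ _ _
      _ ≤ ENNReal.ofReal p * volume B ^ n := by gcongr
      _ = ENNReal.ofReal p * (2 * (volume B / 2)) ^ n := by
          rw [ENNReal.mul_div_cancel (by simp) (by simp)]
      _ = ((K * Q)⁻¹ * (K * Q)) * (ENNReal.ofReal p * (2 * (volume B / 2)) ^ n) := by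
          rw [ENNReal.inv_mul_cancel hKQ0 hKQt, one_mul]
      _ = (K * Q)⁻¹ * 2 ^ n * (K * (ENNReal.ofReal p * Q * (volume B / 2) ^ n)) := by
          rw [mul_pow]; ring
      _ ≤ (K * Q)⁻¹ * 2 ^ n * (2 ^ n * μH[(n : ℝ)] (radSet n A)) := by gcongr
      _ = _ := by
          rw [hD, show (4:ENNReal) = 2 * 2 by norm_num, mul_pow]; ring
  rw [← ENNReal.mul_rpow_of_nonneg _ _ (by positivity), one_div,
    ENNReal.le_rpow_inv_iff hn0, ENNReal.rpow_natCast]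
  exact h6

lemma radSet_neg (n : ℕ) (A : Set ℝ) (d : ℝ) :
    μH[d] (radSet n (Neg.neg ⁻¹' A)) = μH[d] (radSet n A) := by
  have h := (IsometryEquiv.neg (EuclideanSpace ℝ (Fin (n + 1)))).hausdorffMeasure_preimage d (radSet n A)
  rw [← h]
  congr 1
  ext x
  simp [radSet, inner_neg_left]

lemma arc_lip {F : Type*} [NormedAddCommGroup F] [InnerProductSpace ℝ F] (u v : F)
    (hu : ‖u‖ = 1) (hv : ‖v‖ = 1) (huv : ⟪u, v⟫ = 0) :
    LipschitzWith 1 (fun φ : ℝ => cos φ • u + sin φ • v) := by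
  have hd : ∀ φ : ℝ, HasDerivAt (fun φ : ℝ => cos φ • u + sin φ • v)
      ((-sin φ) • u + cos φ • v) φ := fun φ =>
    ((hasDerivAt_cos φ).smul_const u).add ((hasDerivAt_sin φ).smul_const v)
  apply lipschitzWith_of_nnnorm_deriv_le (𝕜 := ℝ) (fun φ => (hd φ).differentiableAt)
  intro φ
  rw [(hd φ).deriv, ← NNReal.coe_le_coe]
  simp only [coe_nnnorm, NNReal.coe_one]
  have : ‖(-sin φ) • u + cos φ • v‖ ^ 2 = 1 := by
    rw [norm_add_sq_real, inner_smul_left, inner_smul_right, huv, norm_smul, norm_smul, hu, hv]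
    simp
  nlinarith [norm_nonneg ((-sin φ) • u + cos φ • v)]

lemma arc_meas {F : Type*} [NormedAddCommGroup F] [InnerProductSpace ℝ F]
    [MeasurableSpace F] [BorelSpace F] (u v : F)
    (hu : ‖u‖ = 1) (hv : ‖v‖ = 1) (huv : ⟪u, v⟫ = 0) (B : Set ℝ) :
    μH[1] ((fun φ : ℝ => cos φ • u + sin φ • v) '' B) ≤ volume B := by
  have := (arc_lip u v hu hv huv).hausdorffMeasure_image_le (d := 1) zero_le_one B
  simpa [hausdorffMeasure_real] using this

lemma circle_cover {F : Type*} [NormedAddCommGroup F] [InnerProductSpace ℝ F]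
    [MeasurableSpace F] [BorelSpace F] (u v : F)
    (hu : ‖u‖ = 1) (hv : ‖v‖ = 1) (huv : ⟪u, v⟫ = 0) (p : ℝ) (A : Set ℝ) (S : Set F)
    (hS : ∀ x ∈ S, ∃ a b : ℝ, x = a • u + b • v ∧ a ^ 2 + b ^ 2 = 1 ∧ p * a ∈ A) :
    μH[1] S ≤ 2 * volume {φ ∈ Icc 0 (π/2) | p * cos φ ∈ A} +
      2 * volume {φ ∈ Icc 0 (π/2) | p * cos φ ∈ Neg.neg ⁻¹' A} := by
  set B := {φ ∈ Icc 0 (π/2) | p * cos φ ∈ A}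
  set B' := {φ ∈ Icc 0 (π/2) | p * cos φ ∈ Neg.neg ⁻¹' A}
  let g : F → F → ℝ → F := fun u v φ => cos φ • u + sin φ • v
  have hsub : S ⊆ (g u v '' B ∪ g u (-v) '' B) ∪ (g (-u) v '' B' ∪ g (-u) (-v) '' B') := by
    intro x hx
    obtain ⟨a, b, rfl, hab, hpA⟩ := hS x hx
    have ha1 : |a| ≤ 1 := by
      rw [← sq_le_one_iff_abs_le_one]; nlinarith
    set φ := arccos |a| with hφ
    have hc : cos φ = |a| := cos_arccos (by linarith [abs_nonneg a]) ha1
    have hs : sin φ = |b| := by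
      rw [hφ, sin_arccos, sq_abs, show 1 - a ^ 2 = b ^ 2 by linarith, Real.sqrt_sq_eq_abs]
    have hI : φ ∈ Icc 0 (π/2) := ⟨arccos_nonneg _, arccos_le_pi_div_two.2 (abs_nonneg _)⟩
    rcases le_total 0 a with ha | ha
    · left
      have hB : φ ∈ B := ⟨hI, by rw [hc, abs_of_nonneg ha]; exact hpA⟩
      rw [abs_of_nonneg ha] at hc
      rcases le_total 0 b with hb | hb
      · left; refine ⟨φ, hB, ?_⟩
        simp only [g]; rw [hc, hs, abs_of_nonneg hb]
      · right; refine ⟨φ, hB, ?_⟩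
        simp only [g]; rw [hc, hs, abs_of_nonpos hb]; simp
    · right
      have hB : φ ∈ B' := ⟨hI, by rw [hc, abs_of_nonpos ha]; simpa using hpA⟩
      rw [abs_of_nonpos ha] at hc
      rcases le_total 0 b with hb | hb
      · left; refine ⟨φ, hB, ?_⟩
        simp only [g]; rw [hc, hs, abs_of_nonneg hb]; simp
      · right; refine ⟨φ, hB, ?_⟩
        simp only [g]; rw [hc, hs, abs_of_nonpos hb]; simp
  calc μH[1] S ≤ _ := measure_mono hsub
    _ ≤ _ := measure_union_le _ _
    _ ≤ _ := add_le_add (measure_union_le _ _) (measure_union_le _ _)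
    _ ≤ (volume B + volume B) + (volume B' + volume B') := by
        refine add_le_add (add_le_add ?_ ?_) (add_le_add ?_ ?_) <;>
        refine arc_meas _ _ ?_ ?_ ?_ _ <;> simp [hu, hv, huv]
    _ = _ := by ring

theorem spherical_xray_endpoint (n : ℕ) (hn : 2 ≤ n) :
    ∃ C : ℝ, 0 < C ∧
      ∀ (E : Set (EuclideanSpace ℝ (Fin (n + 1)))) (A : Set ℝ), MeasurableSet A →
        E = {x : EuclideanSpace ℝ (Fin (n + 1)) |
              ‖x‖ = 1 ∧ ⟪x, EuclideanSpace.single (Fin.last n) (1 : ℝ)⟫ ∈ A} →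
        ∀ V : Submodule ℝ (EuclideanSpace ℝ (Fin (n + 1))),
          Module.finrank ℝ V = 2 →
          ENNReal.ofReal ‖Submodule.orthogonalProjectionOnto V (EuclideanSpace.single (Fin.last n) (1 : ℝ))‖ *
              μH[(1 : ℝ)] (E ∩ {x : EuclideanSpace ℝ (Fin (n + 1)) | ‖x‖ = 1} ∩
                (V : Set (EuclideanSpace ℝ (Fin (n + 1))))) ≤
            ENNReal.ofReal C * (μH[(n : ℝ)] E) ^ ((1 : ℝ) / n) := by
  obtain ⟨C, hC0, hC⟩ := half_bound_s7 n hn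
  refine ⟨4 * C + 1, by positivity, ?_⟩
  intro E A hA hE V hV
  change E = radSet n A at hE
  set o : EuclideanSpace ℝ (Fin (n + 1)) := EuclideanSpace.single (Fin.last n) (1 : ℝ) with ho
  set w := Submodule.orthogonalProjectionOnto V o with hw
  set p := ‖w‖ with hp
  rcases (norm_nonneg w).eq_or_lt with h0 | hpos
  · rw [hp, ← h0]; simp
  have hp1 : p ≤ 1 := by
    have h1 := V.norm_orthogonalProjectionOnto_apply_le o
    have h2 : ‖o‖ = 1 := by simp [ho]
    rwa [h2] at h1
  -- orthonormal basis of V whose first vector is w / ‖w‖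
  obtain ⟨b, hb⟩ := Orthonormal.exists_orthonormalBasis_extension_of_card_eq (𝕜 := ℝ) (E := V)
    (ι := Fin 2) (by simpa using hV) (v := fun _ => p⁻¹ • w) (s := {0}) (by
      refine ⟨?_, ?_⟩
      · intro i
        simp only [Set.domRestrict_apply, norm_smul, norm_inv, norm_norm, hp]
        exact inv_mul_cancel₀ hpos.ne'
      · intro i j hij
        exact absurd (Subsingleton.elim i j) hij)
  have hb0 : b 0 = p⁻¹ • w := hb 0 rfl
  have hwb : w = p • b 0 := by rw [hb0, smul_smul, mul_inv_cancel₀ hpos.ne', one_smul]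
  have hcov := circle_cover (b 0 : EuclideanSpace ℝ (Fin (n + 1))) (b 1 : EuclideanSpace ℝ (Fin (n + 1)))
    (b.norm_eq_one 0) (b.norm_eq_one 1)
    (by rw [← Submodule.coe_inner]; exact b.inner_eq_zero (by simp)) p A
    (E ∩ {x : EuclideanSpace ℝ (Fin (n + 1)) | ‖x‖ = 1} ∩ (V : Set (EuclideanSpace ℝ (Fin (n + 1))))) (by
      rintro x ⟨⟨hxE, hx1⟩, hxV⟩
      rw [hE] at hxE
      let y : V := ⟨x, hxV⟩
      have hy : ⟪b 0, y⟫ • b 0 + ⟪b 1, y⟫ • b 1 = y := by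
        have := b.sum_repr' y
        rwa [Fin.sum_univ_two] at this
      refine ⟨⟪b 0, y⟫, ⟪b 1, y⟫, ?_, ?_, ?_⟩
      · have := congrArg (Subtype.val) hy
        simpa using this.symm
      · have h1 := b.sum_sq_norm_inner_right y
        rw [Fin.sum_univ_two] at h1
        have h2 : ‖y‖ = 1 := hx1
        rw [h2] at h1
        simpa using h1
      · have h1 : ⟪x, o⟫ = p * ⟪b 0, y⟫ := by
          have h2 := V.inner_orthogonalProjectionOnto_eq_of_mem_left y o
          rw [← hw, hwb, inner_smul_right, real_inner_comm] at h2
          exact h2.symm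
        rw [← h1]
        exact hxE.2)
  have e1 := hC A hA p hpos hp1
  have e2 := hC (Neg.neg ⁻¹' A) (measurable_neg hA) p hpos hp1
  rw [radSet_neg] at e2
  rw [← hE] at e1 e2
  set M := (μH[(n : ℝ)] E) ^ ((1 : ℝ) / n)
  set v1 := volume {φ ∈ Icc 0 (π/2) | p * cos φ ∈ A}
  set v2 := volume {φ ∈ Icc 0 (π/2) | p * cos φ ∈ Neg.neg ⁻¹' A}
  calc _ ≤ ENNReal.ofReal p * (2 * v1 + 2 * v2) := by gcongr
    _ = 2 * (ENNReal.ofReal p * v1) + 2 * (ENNReal.ofReal p * v2) := by ring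
    _ ≤ 2 * (ENNReal.ofReal C * M) + 2 * (ENNReal.ofReal C * M) := by gcongr
    _ = ENNReal.ofReal (4 * C) * M := by
        rw [ENNReal.ofReal_mul (by norm_num)]
        simp only [ENNReal.ofReal_ofNat]; ring
    _ ≤ _ := by gcongr; linarith
end
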